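/- Restricted-data MinHash bounds: let W1, W2 be nonempty finite sets with cosine similarity S and resemblance R, and suppose the data satisfy z ≤ z* where z = √(|W2|/|W1|) + √(|W1|/|W2|) and z* ≥ 2. Then for S0 ∈ (0,1] and c ∈ (0,1): if S ≥ S0 then R ≥ S0/(z* − S0), and if S ≤ cS0 then R ≤ cS0/(2 − cS0). -/

import Mathlib

/-!
The resemblance is a function of the cosine similarity and the size imbalance alone:
`R = S / (z - S)`. This is increasing in `S` and decreasing in `z`, and `2 ≤ z ≤ z*`, so a lower
bound on `S` is combined with `z ≤ z*` and an upper bound with `2 ≤ z`.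
-/

theorem sqrt_div_add_sqrt_div {x y : ℝ} (hx : 0 < x) (hy : 0 < y) :
    √(y / x) + √(x / y) = (x + y) / √(x * y) := by
  rw [Real.sqrt_div hy.le, Real.sqrt_div hx.le, Real.sqrt_mul hx.le,
    div_add_div _ _ (Real.sqrt_pos.2 hx).ne' (Real.sqrt_pos.2 hy).ne',
    Real.mul_self_sqrt hx.le, Real.mul_self_sqrt hy.le, add_comm y x]

theorem two_le_sqrt_div_add_sqrt_div {x y : ℝ} (hx : 0 < x) (hy : 0 < y) :
    2 ≤ √(y / x) + √(x / y) := by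
  have h_mul : √(y / x) * √(x / y) = 1 := by
    rw [← Real.sqrt_mul (by positivity), div_mul_div_cancel₀ hx.ne', div_self hy.ne',
      Real.sqrt_one]
  simpa only [mul_one] using
    two_mul_le_add_of_sq_le_mul (Real.sqrt_nonneg _) (Real.sqrt_nonneg _)
      ((one_pow 2).trans h_mul.symm).le

theorem div_sub_self_le_div_sub_self {K : Type*} [Field K] [LinearOrder K] [IsStrictOrderedRing K]
    {x y z w : K} (hy : 0 ≤ y) (hyz : y < z) (hxy : x ≤ y) (hzw : z ≤ w) :
    x / (w - x) ≤ y / (z - y) :=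
  div_le_div₀ hy hxy (sub_pos.2 hyz) (sub_le_sub hzw hxy)

section MinHash

open scoped Finset

variable {α : Type*} {s t : Finset α}

/-- The quantity `z`, which measures how far the sizes of two nonempty finite sets are from being
equal. Division by zero makes it `0` if one of the sets is empty. -/
noncomputable def sizeImbalance (s t : Finset α) : ℝ :=
  √(#t / #s) + √(#s / #t)

theorem two_le_sizeImbalance (hs : s.Nonempty) (ht : t.Nonempty) : 2 ≤ sizeImbalance s t :=
  two_le_sqrt_div_add_sqrt_div (mod_cast hs.card_pos) (mod_cast ht.card_pos)

variable [DecidableEq α]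

/-- The cosine similarity `S` of two finite sets, i.e. the cosine of the angle between their
indicator vectors. Division by zero makes it `0` if one of the sets is empty. -/
noncomputable def cosineSimilarity (s t : Finset α) : ℝ :=
  #(s ∩ t) / √(#s * #t)

/-- The resemblance `R` (Jaccard index) of two finite sets, the collision probability of MinHash.
Division by zero makes it `0` if both sets are empty. -/
noncomputable def resemblance (s t : Finset α) : ℝ :=
  #(s ∩ t) / #(s ∪ t)

theorem cosineSimilarity_nonneg : 0 ≤ cosineSimilarity s t := by
  unfold cosineSimilarity
  positivity

theorem cosineSimilarity_le_one : cosineSimilarity s t ≤ 1 := by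
  refine div_le_one_of_le₀ (Real.le_sqrt_of_sq_le ?_) (Real.sqrt_nonneg _)
  rw [sq]
  gcongr
  exacts [Finset.inter_subset_left, Finset.inter_subset_right]

theorem cosineSimilarity_lt_sizeImbalance (hs : s.Nonempty) (ht : t.Nonempty) :
    cosineSimilarity s t < sizeImbalance s t :=
  cosineSimilarity_le_one.trans_lt (one_lt_two.trans_le (two_le_sizeImbalance hs ht))

theorem resemblance_eq_div_sub (hs : s.Nonempty) (ht : t.Nonempty) :
    resemblance s t = cosineSimilarity s t / (sizeImbalance s t - cosineSimilarity s t) := by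
  have hs_pos : (0 : ℝ) < #s := mod_cast hs.card_pos
  have ht_pos : (0 : ℝ) < #t := mod_cast ht.card_pos
  have h_union : (#s + #t - #(s ∩ t) : ℝ) = #(s ∪ t) :=
    sub_eq_of_eq_add (mod_cast (Finset.card_union_add_card_inter s t).symm)
  have h_sub : sizeImbalance s t - cosineSimilarity s t = #(s ∪ t) / √(#s * #t) := by
    rw [sizeImbalance, sqrt_div_add_sqrt_div hs_pos ht_pos, cosineSimilarity, ← sub_div, h_union]
  rw [h_sub, cosineSimilarity, div_div_div_cancel_right₀ (by positivity), resemblance]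

theorem div_sub_le_resemblance (hs : s.Nonempty) (ht : t.Nonempty) {z x : ℝ}
    (hz : sizeImbalance s t ≤ z) (hx : x ≤ cosineSimilarity s t) :
    x / (z - x) ≤ resemblance s t := by
  rw [resemblance_eq_div_sub hs ht]
  exact div_sub_self_le_div_sub_self cosineSimilarity_nonneg
    (cosineSimilarity_lt_sizeImbalance hs ht) hx hz

theorem resemblance_le_div_two_sub (hs : s.Nonempty) (ht : t.Nonempty) {y : ℝ} (hy : y < 2)
    (hSy : cosineSimilarity s t ≤ y) : resemblance s t ≤ y / (2 - y) := by
  rw [resemblance_eq_div_sub hs ht]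
  exact div_sub_self_le_div_sub_self (cosineSimilarity_nonneg.trans hSy) hy hSy
    (two_le_sizeImbalance hs ht)

theorem restricted_minhash_bounds_general (hs : s.Nonempty) (ht : t.Nonempty) {zstar x y : ℝ}
    (hz : sizeImbalance s t ≤ zstar) (hy : y < 2) :
    (x ≤ cosineSimilarity s t → x / (zstar - x) ≤ resemblance s t) ∧
      (cosineSimilarity s t ≤ y → resemblance s t ≤ y / (2 - y)) :=
  ⟨div_sub_le_resemblance hs ht hz, resemblance_le_div_two_sub hs ht hy⟩

end MinHash

/-- Restricted-data MinHash bounds: if `z = √(f2/f1) + √(f1/f2) ≤ z*` with `z* ≥ 2`, then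
`S ≥ S0` implies `R ≥ S0/(z* - S0)` and `S ≤ c·S0` implies `R ≤ c·S0/(2 - c·S0)`. -/
theorem restricted_minhash_bounds (W1 W2 : Finset ℕ) (h1 : W1.Nonempty) (h2 : W2.Nonempty)
    (zstar : ℝ) (hzstar : 2 ≤ zstar)
    (hz : Real.sqrt ((W2.card : ℝ) / (W1.card : ℝ)) +
        Real.sqrt ((W1.card : ℝ) / (W2.card : ℝ)) ≤ zstar)
    (S0 c : ℝ) (hS0 : 0 < S0) (hS0' : S0 ≤ 1) (hc : 0 < c) (hc' : c < 1) :
    (S0 ≤ ((W1 ∩ W2).card : ℝ) / Real.sqrt ((W1.card : ℝ) * (W2.card : ℝ)) →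
        S0 / (zstar - S0) ≤ ((W1 ∩ W2).card : ℝ) / ((W1 ∪ W2).card : ℝ)) ∧
      (((W1 ∩ W2).card : ℝ) / Real.sqrt ((W1.card : ℝ) * (W2.card : ℝ)) ≤ c * S0 →
        ((W1 ∩ W2).card : ℝ) / ((W1 ∪ W2).card : ℝ) ≤ c * S0 / (2 - c * S0)) := by
  have h_two : c * S0 < 2 := (mul_le_one₀ hc'.le hS0.le hS0').trans_lt one_lt_two
  exact restricted_minhash_bounds_general h1 h2 hz h_two
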